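/- arXiv:1112.3291 — 3 statements merged into one kernel-verified Lean document; each statement's English description precedes it below -/
import Mathlib

section
/- The ℤ-linear map d : T ⊗[ℤ] V → T determined by d(x ⊗ e_i) = x · e_{σ(i)} − c(i) · x for x ∈ T and basis vectors e_i of V is injective. -/
open TensorProduct

/-- The tensor algebra on the free module. -/
abbrev BTens (ι : Type*) := TensorAlgebra ℤ (ι →₀ ℤ)

/-- The source of the boundary map. -/
abbrev BMod (ι : Type*) := TensorAlgebra ℤ (ι →₀ ℤ) ⊗[ℤ] (ι →₀ ℤ)

/-- Let `V = ι →₀ ℤ` with basis `(e_i)`, `T = TensorAlgebra ℤ V`, `σ : ι → ι` an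
involution and `c : ι → ℤ` with `c ∘ σ = c`.  The ℤ-linear map
`d : T ⊗[ℤ] V → T` determined by `d (x ⊗ e_i) = x * e_{σ i} - c i • x` is injective. -/
theorem tensorAlgebra_boundary_injective
    {ι : Type*} (σ : ι → ι) (hσ : σ ∘ σ = id) (c : ι → ℤ) (hc : c ∘ σ = c)
    (d : TensorAlgebra ℤ (ι →₀ ℤ) ⊗[ℤ] (ι →₀ ℤ) →ₗ[ℤ] TensorAlgebra ℤ (ι →₀ ℤ))
    (hd : ∀ (x : TensorAlgebra ℤ (ι →₀ ℤ)) (i : ι),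
      d (x ⊗ₜ[ℤ] Finsupp.single i 1) =
        x * TensorAlgebra.ι ℤ (Finsupp.single (σ i) 1) - c i • x) :
    Function.Injective d := by
  let B : ι → (BTens ι × BMod ι →ₗ[ℤ] BMod ι) := fun j =>
    ((TensorProduct.mk ℤ (BTens ι) (ι →₀ ℤ)).flip (Finsupp.single (σ j) 1)).comp
        (LinearMap.fst ℤ (BTens ι) (BMod ι))
  -- right action of the generator `e_j` on `(BTens ι) × (BMod ι)`
  let A : ι → Module.End ℤ ((BTens ι) × (BMod ι)) := fun j =>
    LinearMap.prod
      ((LinearMap.mulRight ℤ (TensorAlgebra.ι ℤ (Finsupp.single j 1))).comp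
        (LinearMap.fst ℤ (BTens ι) (BMod ι)))
      (B j + c j • LinearMap.snd ℤ (BTens ι) (BMod ι))
  let f : (ι →₀ ℤ) →ₗ[ℤ] (Module.End ℤ ((BTens ι) × (BMod ι)))ᵐᵒᵖ :=
    Finsupp.linearCombination ℤ (fun j => MulOpposite.op (A j))
  let ρ : (BTens ι) →ₐ[ℤ] (Module.End ℤ ((BTens ι) × (BMod ι)))ᵐᵒᵖ := TensorAlgebra.lift ℤ f
  have hρ : ∀ j, (ρ (TensorAlgebra.ι ℤ (Finsupp.single j 1))).unop = A j := by
    intro j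
    simp only [ρ, f]
    rw [TensorAlgebra.lift_ι_apply]
    simp
  have hfst : ∀ (y : (BTens ι)) (p : (BTens ι) × (BMod ι)), ((ρ y).unop p).1 = p.1 * y := by
    intro y
    induction y using TensorAlgebra.induction with
    | algebraMap r => intro p; rw [AlgHom.commutes, Algebra.algebraMap_eq_smul_one, Algebra.algebraMap_eq_smul_one, mul_smul_comm, mul_one]; rfl
    | ι v =>
      induction v using Finsupp.induction_linear with
      | zero => intro p; simp
      | add a b ha hb => intro p; simp [ha, hb, mul_add]
      | single j n =>
        intro p
        have : (Finsupp.single j n : ι →₀ ℤ) = n • Finsupp.single j 1 := by simp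
        rw [this, map_smul, map_smul, MulOpposite.unop_smul, hρ, mul_smul_comm]
        rfl
    | mul a b ha hb => intro p; simp [ha, hb, mul_assoc]
    | add a b ha hb => intro p; simp [ha, hb, mul_add]
  let D : (BTens ι) →ₗ[ℤ] (BMod ι) :=
    { toFun := fun y => ((ρ y).unop (1, 0)).2
      map_add' := by intro a b; simp
      map_smul' := by intro r a; rw [map_smul]; rfl }
  have hD : ∀ (x : (BTens ι)) (j : ι), D (x * TensorAlgebra.ι ℤ (Finsupp.single j 1)) =
      x ⊗ₜ[ℤ] Finsupp.single (σ j) 1 + c j • D x := by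
    intro x j
    have h1 := hfst x (1, 0)
    change ((ρ (x * TensorAlgebra.ι ℤ (Finsupp.single j 1))).unop (1, 0)).2 =
      x ⊗ₜ[ℤ] Finsupp.single (σ j) 1 + c j • ((ρ x).unop (1, 0)).2
    rw [map_mul, MulOpposite.unop_mul, hρ, Module.End.mul_apply]
    change ((ρ x).unop (1, 0)).1 ⊗ₜ[ℤ] Finsupp.single (σ j) 1 + c j • ((ρ x).unop (1, 0)).2 = _
    rw [h1, one_mul]
  have key : D.comp d = LinearMap.id := by
    ext x i
    have h1 : σ (σ i) = i := congrFun hσ i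
    have h2 : c (σ i) = c i := congrFun hc i
    have : D (d (x ⊗ₜ[ℤ] Finsupp.single i 1)) = x ⊗ₜ[ℤ] Finsupp.single i 1 := by
      rw [hd, map_sub, hD, map_smul, h1, h2, add_sub_cancel_right]
    exact this
  exact Function.LeftInverse.injective (g := D) (fun w => LinearMap.congr_fun key w)
end

section
/- The range of the ℤ-linear map d : T ⊗[ℤ] V → T, d(x ⊗ e_i) = x · e_{σ(i)} − c(i) · x, equals the kernel of the ℤ-algebra homomorphism ε : T → ℤ with ε(e_i) = c(i). Together with injectivity of d and surjectivity of ε, the augmented sequence 0 → T ⊗[ℤ] V → T → ℤ → 0 is exact. -/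
open TensorProduct

/-- The operator `(x, m) ↦ (x * e_v, x ⊗ f v + g v • m)` on `T × M`. -/
noncomputable def foxStep {R V : Type*} [CommRing R] [AddCommGroup V] [Module R V] (f : V →ₗ[R] V) (g : V →ₗ[R] R) :
    V →ₗ[R] (Module.End R (TensorAlgebra R V × (TensorAlgebra R V ⊗[R] V)))ᵐᵒᵖ where
  toFun v := MulOpposite.op (LinearMap.prod
    ((LinearMap.mulRight R (TensorAlgebra.ι R v)).comp (LinearMap.fst R _ _))
    (((TensorProduct.mk R (TensorAlgebra R V) V).flip (f v)).comp (LinearMap.fst R _ _)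
      + g v • LinearMap.snd R _ _))
  map_add' a b := by
    apply MulOpposite.unop_injective
    apply LinearMap.ext
    rintro ⟨x, m⟩
    refine Prod.ext ?_ ?_
    · change x * TensorAlgebra.ι R (a + b) = x * TensorAlgebra.ι R a + x * TensorAlgebra.ι R b
      rw [map_add, mul_add]
    · change x ⊗ₜ[R] f (a + b) + g (a + b) • m
        = (x ⊗ₜ[R] f a + g a • m) + (x ⊗ₜ[R] f b + g b • m)
      rw [map_add, map_add, TensorProduct.tmul_add, add_smul]
      abel
  map_smul' r a := by
    apply MulOpposite.unop_injective
    apply LinearMap.ext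
    rintro ⟨x, m⟩
    refine Prod.ext ?_ ?_
    · change x * TensorAlgebra.ι R (r • a) = r • (x * TensorAlgebra.ι R a)
      rw [map_smul, mul_smul_comm]
    · change x ⊗ₜ[R] f (r • a) + g (r • a) • m = r • (x ⊗ₜ[R] f a + g a • m)
      rw [map_smul, map_smul, TensorProduct.tmul_smul, smul_add, smul_assoc]

theorem foxStep_apply {R V : Type*} [CommRing R] [AddCommGroup V] [Module R V] (f : V →ₗ[R] V) (g : V →ₗ[R] R) (v : V)
    (p : TensorAlgebra R V × (TensorAlgebra R V ⊗[R] V)) :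
    (foxStep f g v).unop p = (p.1 * TensorAlgebra.ι R v, p.1 ⊗ₜ f v + g v • p.2) := rfl

theorem fox_fst {R V : Type*} [CommRing R] [AddCommGroup V] [Module R V] (f : V →ₗ[R] V) (g : V →ₗ[R] R)
    (y : TensorAlgebra R V) : ∀ p : TensorAlgebra R V × (TensorAlgebra R V ⊗[R] V),
    ((TensorAlgebra.lift R (foxStep f g) y).unop p).1 = p.1 * y := by
  induction y using TensorAlgebra.induction with
  | algebraMap r => 
    intro p
    rw [AlgHom.commutes, MulOpposite.algebraMap_apply, MulOpposite.unop_op,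
      Module.algebraMap_end_apply, Prod.smul_fst, Algebra.smul_def, Algebra.commutes]
  | ι v => intro p; rw [TensorAlgebra.lift_ι_apply, foxStep_apply]
  | mul a b ha hb =>
    intro p
    rw [map_mul, MulOpposite.unop_mul, Module.End.mul_apply, hb, ha, mul_assoc]
  | add a b ha hb =>
    intro p
    rw [map_add, MulOpposite.unop_add, LinearMap.add_apply, Prod.fst_add, ha, hb, mul_add]

/-- The Fox-type derivation splitting `d`. -/
noncomputable def foxS {R V : Type*} [CommRing R] [AddCommGroup V] [Module R V] (f : V →ₗ[R] V) (g : V →ₗ[R] R) :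
    TensorAlgebra R V →ₗ[R] (TensorAlgebra R V ⊗[R] V) where
  toFun y := ((TensorAlgebra.lift R (foxStep f g) y).unop (1, 0)).2
  map_add' a b := by simp
  map_smul' r a := by
    rw [map_smul, MulOpposite.unop_smul, LinearMap.smul_apply, Prod.smul_snd, RingHom.id_apply]

theorem foxS_mul_ι {R V : Type*} [CommRing R] [AddCommGroup V] [Module R V] (f : V →ₗ[R] V) (g : V →ₗ[R] R)
    (x : TensorAlgebra R V) (v : V) :
    foxS f g (x * TensorAlgebra.ι R v) = x ⊗ₜ f v + g v • foxS f g x := by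
  change ((TensorAlgebra.lift R (foxStep f g) _).unop (1, 0)).2 = _
  rw [map_mul, MulOpposite.unop_mul, Module.End.mul_apply, TensorAlgebra.lift_ι_apply,
    foxStep_apply, fox_fst, one_mul]
  rfl

theorem fox_exact
    {ι R : Type*} [CommRing R] (σ : ι → ι) (hσ : σ ∘ σ = id) (c : ι → R) (hc : c ∘ σ = c)
    (ε : TensorAlgebra R (ι →₀ R) →ₐ[R] R)
    (hε : ∀ i : ι, ε (TensorAlgebra.ι R (Finsupp.single i 1)) = c i)
    (d : TensorAlgebra R (ι →₀ R) ⊗[R] (ι →₀ R) →ₗ[R] TensorAlgebra R (ι →₀ R))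
    (hd : ∀ (x : TensorAlgebra R (ι →₀ R)) (i : ι),
      d (x ⊗ₜ[R] Finsupp.single i 1) =
        x * TensorAlgebra.ι R (Finsupp.single (σ i) 1) - c i • x) :
    Function.Injective d ∧
      LinearMap.range d = LinearMap.ker ε.toLinearMap ∧
      Function.Surjective ε := by
  have hσ' : ∀ i, σ (σ i) = i := fun i => congrFun hσ i
  have hc' : ∀ i, c (σ i) = c i := fun i => congrFun hc i
  have hleft : ∀ (y : TensorAlgebra R (ι →₀ R)) (t : TensorAlgebra R (ι →₀ R) ⊗[R] (ι →₀ R)),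
      d ((LinearMap.mulLeft R y).rTensor (ι →₀ R) t) = y * d t := by
    intro y t
    have : d ∘ₗ (LinearMap.mulLeft R y).rTensor (ι →₀ R) = LinearMap.mulLeft R y ∘ₗ d := by
      apply TensorProduct.ext'
      intro x v
      induction v using Finsupp.induction_linear with
      | zero => simp
      | add a b ha hb => rw [TensorProduct.tmul_add, map_add, map_add, ha, hb]
      | single i n =>
        have h : Finsupp.single i n = n • Finsupp.single i (1 : R) := by simp
        rw [h, TensorProduct.tmul_smul, map_smul, map_smul]
        congr 1
        simp only [LinearMap.comp_apply, LinearMap.rTensor_tmul, LinearMap.mulLeft_apply, hd]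
        rw [mul_sub, mul_assoc, mul_smul_comm]
    exact LinearMap.congr_fun this t
  refine ⟨?_, ?_, ?_⟩
  · let g : (ι →₀ R) →ₗ[R] R := ε.toLinearMap ∘ₗ TensorAlgebra.ι R
    let f : (ι →₀ R) →ₗ[R] (ι →₀ R) := Finsupp.lmapDomain R R σ
    have hsd : foxS f g ∘ₗ d = LinearMap.id := by
      apply TensorProduct.ext'
      intro x v
      induction v using Finsupp.induction_linear with
      | zero => simp
      | add a b ha hb => rw [TensorProduct.tmul_add, map_add, map_add, ha, hb]
      | single i n =>
        have h : Finsupp.single i n = n • Finsupp.single i (1 : R) := by simp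
        rw [h, TensorProduct.tmul_smul, map_smul, map_smul]
        congr 1
        rw [LinearMap.comp_apply, hd, map_sub, foxS_mul_ι, map_smul]
        have h1 : g (Finsupp.single (σ i) 1) = c i := (hε (σ i)).trans (hc' i)
        have h2 : f (Finsupp.single (σ i) 1) = Finsupp.single i 1 := by
          simp [f, Finsupp.mapDomain_single, hσ']
        rw [h1, h2, add_sub_cancel_right, LinearMap.id_apply]
    exact Function.LeftInverse.injective (g := foxS f g) (LinearMap.congr_fun hsd)
  · apply le_antisymm
    · rw [LinearMap.range_le_ker_iff]
      apply TensorProduct.ext'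
      intro x v
      induction v using Finsupp.induction_linear with
      | zero => simp
      | add a b ha hb => rw [TensorProduct.tmul_add, map_add, map_add, ha, hb]
      | single i n =>
        have h : Finsupp.single i n = n • Finsupp.single i (1 : R) := by simp
        rw [h, TensorProduct.tmul_smul, map_smul, map_smul]
        congr 1
        rw [LinearMap.comp_apply, hd, AlgHom.toLinearMap_apply, map_sub, map_mul, hε, hc',
          map_smul, smul_eq_mul, mul_comm, sub_self, LinearMap.zero_apply]
    · have key : ∀ x, x - algebraMap R _ (ε x) ∈ LinearMap.range d := by
        intro x
        induction x using TensorAlgebra.induction with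
        | algebraMap r => simp
        | ι v =>
          induction v using Finsupp.induction_linear with
          | zero => simp
          | add a b ha hb =>
            have := add_mem ha hb
            rwa [← add_sub_add_comm, ← map_add, ← map_add, ← map_add, ← map_add] at this
          | single i n =>
            have h : Finsupp.single i n = n • Finsupp.single i (1 : R) := by simp
            have h0 : TensorAlgebra.ι R (Finsupp.single i (1 : R)) - algebraMap R _ (c i)
                ∈ LinearMap.range d := by
              refine ⟨1 ⊗ₜ Finsupp.single (σ i) 1, ?_⟩
              rw [hd, hσ', hc', one_mul, Algebra.algebraMap_eq_smul_one]
            have := Submodule.smul_mem _ n h0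
            rw [h, map_smul, map_smul, hε]
            convert this using 1
            rw [smul_sub, Algebra.algebraMap_eq_smul_one, Algebra.algebraMap_eq_smul_one,
              smul_assoc]
        | mul a b ha hb =>
          obtain ⟨t, ht⟩ := hb
          have h1 : a * (b - algebraMap R _ (ε b)) ∈ LinearMap.range d :=
            ⟨_, (hleft a t).trans (by rw [ht])⟩
          have h2 := add_mem h1 (Submodule.smul_mem _ (ε b) ha)
          convert h2 using 1
          rw [map_mul, map_mul, Algebra.smul_def, mul_sub, mul_sub,
            Algebra.commutes (ε b) a, Algebra.commutes (ε b) (algebraMap R _ (ε a))]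
          abel
        | add a b ha hb =>
          have := add_mem ha hb
          rwa [← add_sub_add_comm, ← map_add, ← map_add] at this
      intro x hx
      have hx' : ε x = 0 := hx
      have := key x
      rwa [hx', map_zero, sub_zero] at this
  · intro n
    exact ⟨algebraMap R _ n, by rw [AlgHom.commutes]; rfl⟩

/-- Let `V = ι →₀ ℤ` with basis `(e_i)`, `T = TensorAlgebra ℤ V`, `σ : ι → ι` an
involution, `c : ι → ℤ` with `c ∘ σ = c`, `ε : T → ℤ` the ℤ-algebra homomorphism with
`ε (e_i) = c i`, and `d : T ⊗[ℤ] V → T` the ℤ-linear map with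
`d (x ⊗ e_i) = x * e_{σ i} - c i • x`.  Then the range of `d` equals the kernel of `ε`;
together with injectivity of `d` and surjectivity of `ε`, the augmented sequence
`0 → T ⊗[ℤ] V → T → ℤ → 0` is exact. -/
theorem tensorAlgebra_resolution_exact
    {ι : Type*} (σ : ι → ι) (hσ : σ ∘ σ = id) (c : ι → ℤ) (hc : c ∘ σ = c)
    (ε : TensorAlgebra ℤ (ι →₀ ℤ) →ₐ[ℤ] ℤ)
    (hε : ∀ i : ι, ε (TensorAlgebra.ι ℤ (Finsupp.single i 1)) = c i)
    (d : TensorAlgebra ℤ (ι →₀ ℤ) ⊗[ℤ] (ι →₀ ℤ) →ₗ[ℤ] TensorAlgebra ℤ (ι →₀ ℤ))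
    (hd : ∀ (x : TensorAlgebra ℤ (ι →₀ ℤ)) (i : ι),
      d (x ⊗ₜ[ℤ] Finsupp.single i 1) =
        x * TensorAlgebra.ι ℤ (Finsupp.single (σ i) 1) - c i • x) :
    Function.Injective d ∧
      LinearMap.range d = LinearMap.ker ε.toLinearMap ∧
      Function.Surjective ε := by
  exact fox_exact σ hσ c hc ε hε d hd
end

section
/- There exist ℤ-linear maps s : ℤ → T and h : T → T ⊗[ℤ] V such that ε ∘ s = id on ℤ, d ∘ h + s ∘ ε = id on T, and h ∘ d = id on T ⊗[ℤ] V. In other words, the augmented complex 0 → T ⊗[ℤ] V → T → ℤ → 0 admits a ℤ-linear contracting homotopy, so it is split exact as a complex of ℤ-modules. -/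
open TensorProduct

/-- Fox derivative along an augmentation: a linear map `h` with
`h (x * y) = x • h y + ε y • h x` and prescribed values on generators. -/
theorem exists_fox {R V M : Type*} [CommRing R] [AddCommGroup V] [Module R V] [AddCommGroup M]
    [Module R M] [Module (TensorAlgebra R V) M] [IsScalarTower R (TensorAlgebra R V) M]
    (ε : TensorAlgebra R V →ₐ[R] R) (f : V →ₗ[R] M) :
    ∃ h : TensorAlgebra R V →ₗ[R] M, (∀ v, h (TensorAlgebra.ι R v) = f v) ∧
      ∀ x y, h (x * y) = x • h y + ε y • h x := by
  let g : V →ₗ[R] Module.End R (M × R) :=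
    { toFun := fun v =>
        ((Algebra.lsmul R R M (TensorAlgebra.ι R v)) ∘ₗ LinearMap.fst R M R
          + (LinearMap.toSpanSingleton R M (f v)) ∘ₗ LinearMap.snd R M R).prod
          (ε (TensorAlgebra.ι R v) • LinearMap.snd R M R)
      map_add' := by
        intro a b
        ext <;> simp [add_smul]
      map_smul' := by
        intro a b
        ext <;> simp }
  have hg : ∀ v m n, g v (m, n) =
      (TensorAlgebra.ι R v • m + n • f v, ε (TensorAlgebra.ι R v) * n) := by
    intro v m n
    rfl
  let φ := TensorAlgebra.lift R g
  have hφ : ∀ v, φ (TensorAlgebra.ι R v) = g v := fun v => TensorAlgebra.lift_ι_apply g v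
  have h1 : ∀ x m, φ x (m, 0) = (x • m, 0) := by
    intro x
    induction x using TensorAlgebra.induction with
    | algebraMap r => intro m; simp
    | ι v => intro m; simp [hφ, hg]
    | mul a b ha hb => intro m; simp [ha, hb, mul_smul]
    | add a b ha hb => intro m; simp [ha, hb, add_smul]
  have h2 : ∀ x p, (φ x p).2 = ε x * p.2 := by
    intro x
    induction x using TensorAlgebra.induction with
    | algebraMap r => intro m; simp
    | ι v => intro m; obtain ⟨m, n⟩ := m; simp [hφ, hg]
    | mul a b ha hb => intro m; simp [ha, hb, mul_assoc]
    | add a b ha hb => intro m; simp [ha, hb, add_mul]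
  let h : TensorAlgebra R V →ₗ[R] M :=
    LinearMap.fst R M R ∘ₗ LinearMap.applyₗ ((0, 1) : M × R) ∘ₗ φ.toLinearMap
  have hh : ∀ x, h x = (φ x (0, 1)).1 := fun x => rfl
  refine ⟨h, fun v => ?_, fun x y => ?_⟩
  · simp [hh, hφ, hg]
  · have e : φ y (0, 1) = (h y, 0) + ε y • ((0, 1) : M × R) := by
      ext
      · simp [hh]
      · simp [h2]
    rw [hh, map_mul, Module.End.mul_apply, e, map_add, map_smul, h1]
    simp [hh]

/-- Let `V = ι →₀ ℤ` with basis `(e_i)`, `T = TensorAlgebra ℤ V`, `σ : ι → ι` an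
involution, `c : ι → ℤ` with `c ∘ σ = c`, `ε : T → ℤ` the ℤ-algebra homomorphism with
`ε (e_i) = c i`, and `d : T ⊗[ℤ] V → T` the ℤ-linear map with
`d (x ⊗ e_i) = x * e_{σ i} - c i • x`.  Then the augmented complex
`0 → T ⊗[ℤ] V → T → ℤ → 0` admits a ℤ-linear contracting homotopy: there are ℤ-linear
maps `s : ℤ → T` and `h : T → T ⊗[ℤ] V` with `ε ∘ s = id`, `d ∘ h + s ∘ ε = id` and
`h ∘ d = id`. -/
theorem tensorAlgebra_resolution_contracting_homotopy
    {ι : Type*} (σ : ι → ι) (hσ : σ ∘ σ = id) (c : ι → ℤ) (hc : c ∘ σ = c)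
    (ε : TensorAlgebra ℤ (ι →₀ ℤ) →ₐ[ℤ] ℤ)
    (hε : ∀ i : ι, ε (TensorAlgebra.ι ℤ (Finsupp.single i 1)) = c i)
    (d : TensorAlgebra ℤ (ι →₀ ℤ) ⊗[ℤ] (ι →₀ ℤ) →ₗ[ℤ] TensorAlgebra ℤ (ι →₀ ℤ))
    (hd : ∀ (x : TensorAlgebra ℤ (ι →₀ ℤ)) (i : ι),
      d (x ⊗ₜ[ℤ] Finsupp.single i 1) =
        x * TensorAlgebra.ι ℤ (Finsupp.single (σ i) 1) - c i • x) :
    ∃ (s : ℤ →ₗ[ℤ] TensorAlgebra ℤ (ι →₀ ℤ))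
      (h : TensorAlgebra ℤ (ι →₀ ℤ) →ₗ[ℤ]
        TensorAlgebra ℤ (ι →₀ ℤ) ⊗[ℤ] (ι →₀ ℤ)),
      ε.toLinearMap ∘ₗ s = LinearMap.id ∧
      d ∘ₗ h + s ∘ₗ ε.toLinearMap = LinearMap.id ∧
      h ∘ₗ d = LinearMap.id := by
  let f : (ι →₀ ℤ) →ₗ[ℤ] TensorAlgebra ℤ (ι →₀ ℤ) ⊗[ℤ] (ι →₀ ℤ) :=
    TensorProduct.mk ℤ _ _ 1 ∘ₗ Finsupp.lmapDomain ℤ ℤ σ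
  obtain ⟨h, hι, hmul⟩ := exists_fox ε f
  have hσ' : ∀ i, σ (σ i) = i := fun i => congrFun hσ i
  have hc' : ∀ i, c (σ i) = c i := fun i => congrFun hc i
  have h1 : h 1 = 0 := by simpa using hmul 1 1
  have hgen : ∀ i, h (TensorAlgebra.ι ℤ (Finsupp.single i 1)) =
      1 ⊗ₜ[ℤ] Finsupp.single (σ i) 1 := by
    intro i
    rw [hι]
    change 1 ⊗ₜ[ℤ] Finsupp.mapDomain σ (Finsupp.single i 1) = _
    rw [Finsupp.mapDomain_single]
  have hdl : ∀ (x : TensorAlgebra ℤ (ι →₀ ℤ)) m, d (x • m) = x * d m := by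
    intro x m
    induction m using TensorProduct.induction_on with
    | zero => simp
    | add a b ha hb => rw [smul_add, map_add, ha, hb, map_add, mul_add]
    | tmul y v =>
      induction v using Finsupp.induction_linear with
      | zero => simp
      | add a b ha hb => rw [tmul_add, smul_add, map_add, ha, hb, map_add, mul_add]
      | single i n =>
        have : Finsupp.single i n = n • Finsupp.single i (1 : ℤ) := by simp
        rw [this, TensorProduct.tmul_smul, smul_comm x n, LinearMap.map_smul, LinearMap.map_smul,
          TensorProduct.smul_tmul', hd, hd, smul_eq_mul, mul_smul_comm, mul_sub, mul_assoc,
          mul_smul_comm]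
  refine ⟨Algebra.linearMap ℤ _, h, ?_, ?_, ?_⟩
  · ext
    simp
  · ext x
    simp only [LinearMap.add_apply, LinearMap.comp_apply, LinearMap.id_apply,
      AlgHom.toLinearMap_apply, Algebra.linearMap_apply]
    induction x using TensorAlgebra.induction with
    | algebraMap r =>
      rw [Algebra.algebraMap_eq_smul_one, map_smul, h1]
      simp
    | ι v =>
      induction v using Finsupp.induction_linear with
      | zero => simp
      | add a b ha hb =>
        simp only [map_add]
        rw [add_add_add_comm, ha, hb]
      | single i n =>
        have : Finsupp.single i n = n • Finsupp.single i (1 : ℤ) := by simp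
        rw [this]
        simp only [map_smul]
        rw [hgen, hd, hε, hσ', hc']
        simp [Algebra.algebraMap_eq_smul_one, smul_sub, mul_smul]
    | mul a b ha hb =>
      rw [hmul, map_add, LinearMap.map_smul, hdl, eq_sub_of_add_eq ha, eq_sub_of_add_eq hb]
      simp only [map_mul, Algebra.algebraMap_eq_smul_one, mul_sub, smul_sub, mul_smul_comm,
        mul_one, smul_smul, mul_comm (ε a) (ε b)]
      abel
    | add a b ha hb =>
      simp only [map_add]
      rw [add_add_add_comm, ha, hb]
  · apply TensorProduct.ext'
    intro x v
    change h (d (x ⊗ₜ[ℤ] v)) = x ⊗ₜ[ℤ] v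
    induction v using Finsupp.induction_linear with
    | zero => simp
    | add a b ha hb => rw [tmul_add, map_add, map_add, ha, hb]
    | single i n =>
      have : Finsupp.single i n = n • Finsupp.single i (1 : ℤ) := by simp
      rw [this, TensorProduct.tmul_smul, map_smul, map_smul, hd, map_sub, hmul, hgen, hσ', hε,
        hc', map_smul, add_sub_cancel_right, TensorProduct.smul_tmul', smul_eq_mul, mul_one]
end
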